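/- Let T be a positive integer and δ a real number such that sin(δ/2 + π/(2T)) ≠ 0 and sin(δ/2 − π/(2T)) ≠ 0. Then Σ_{τ=0}^{T−1} e^{iτδ}·sin(π(τ + 1/2)/T) = −e^{i·δ(T−1)/2}·cos(Tδ/2)·cos(δ/2)·sin(π/(2T)) / (sin(δ/2 + π/(2T))·sin(δ/2 − π/(2T))), as an identity of complex numbers. -/

import Mathlib

open Real Complex

/-! Splitting the sine window into exponentials turns the sum into the difference of two geometric
sums, with frequencies `δ ± 2φ` for `φ = π / (2T)`. Each of them is a phase times a Dirichlet kernel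
`sin (T x / 2) / sin (x / 2)`. Since `T φ = π / 2`, the numerators are `± cos (T δ / 2)` and the
phases are `± i exp (i δ (T - 1) / 2)`, so only `1 / sin (δ / 2 + φ) - 1 / sin (δ / 2 - φ)` remains
to be put over a common denominator. -/

theorem exp_I_mul_sub_one (x : ℂ) :
    Complex.exp (I * x) - 1 = 2 * I * Complex.exp (I * x / 2) * Complex.sin (x / 2) := by
  have hsq : Complex.exp (I * x) = Complex.exp (I * x / 2) ^ 2 := by
    rw [← Complex.exp_nat_mul]
    congr 1
    push_cast
    ring
  have hexp : Complex.exp (I * x / 2) = Complex.cos (x / 2) + Complex.sin (x / 2) * I := by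
    rw [← Complex.exp_mul_I]
    congr 1
    ring
  rw [hsq, hexp]
  linear_combination
    Complex.sin_sq_add_cos_sq (x / 2) - Complex.sin (x / 2) ^ 2 * Complex.I_sq

theorem sum_range_exp_mul_sin_half (n : ℕ) (x : ℂ) :
    (∑ k ∈ Finset.range n, Complex.exp (I * k * x)) * Complex.sin (x / 2) =
      Complex.exp (I * x * (n - 1) / 2) * Complex.sin (n * x / 2) := by
  have hpow (k : ℕ) : Complex.exp (I * k * x) = Complex.exp (I * x) ^ k := by
    rw [← Complex.exp_nat_mul]
    congr 1
    ring
  have hphase : Complex.exp (I * (n * x) / 2) =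
      Complex.exp (I * x / 2) * Complex.exp (I * x * (n - 1) / 2) := by
    rw [← Complex.exp_add]
    congr 1
    ring
  have hfactor : 2 * I * Complex.exp (I * x / 2) ≠ 0 := by simp [Complex.exp_ne_zero]
  have hgeom := geom_sum_mul (Complex.exp (I * x)) n
  rw [← hpow, mul_assoc I, exp_I_mul_sub_one, exp_I_mul_sub_one, hphase] at hgeom
  simp only [hpow]
  apply mul_left_cancel₀ hfactor
  linear_combination hgeom

section SineWindow

variable (n : ℕ) (δ φ : ℂ)

theorem sum_range_exp_mul_sin_odd_mul_eq_sub_div :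
    ∑ k ∈ Finset.range n, Complex.exp (I * k * δ) * Complex.sin ((2 * k + 1) * φ) =
      (Complex.exp (I * φ) * ∑ k ∈ Finset.range n, Complex.exp (I * k * (δ + 2 * φ)) -
        Complex.exp (-(I * φ)) * ∑ k ∈ Finset.range n, Complex.exp (I * k * (δ - 2 * φ))) /
        (2 * I) := by
  simp only [Finset.mul_sum, ← Finset.sum_sub_distrib, Finset.sum_div]
  refine Finset.sum_congr rfl fun k _ => ?_
  have hplus : Complex.exp (I * φ) * Complex.exp (I * k * (δ + 2 * φ)) =
      Complex.exp (I * k * δ) * Complex.exp ((2 * k + 1) * φ * I) := by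
    simp only [← Complex.exp_add]
    congr 1
    ring
  have hminus : Complex.exp (-(I * φ)) * Complex.exp (I * k * (δ - 2 * φ)) =
      Complex.exp (I * k * δ) * Complex.exp (-((2 * k + 1) * φ) * I) := by
    simp only [← Complex.exp_add]
    congr 1
    ring
  rw [hplus, hminus, Complex.sin, eq_div_iff (by simp)]
  linear_combination Complex.exp (I * k * δ) * (Complex.exp (-((2 * k + 1) * φ) * I) -
    Complex.exp ((2 * k + 1) * φ * I)) * Complex.I_sq

theorem sum_range_exp_mul_sin_odd_mul_mul_sin_mul_sin :
    (∑ k ∈ Finset.range n, Complex.exp (I * k * δ) * Complex.sin ((2 * k + 1) * φ)) *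
        (Complex.sin (δ / 2 + φ) * Complex.sin (δ / 2 - φ)) =
      Complex.exp (I * δ * (n - 1) / 2) *
        (Complex.exp (n * φ * I) * Complex.sin (n * δ / 2 + n * φ) * Complex.sin (δ / 2 - φ) -
          Complex.exp (-(n * φ) * I) * Complex.sin (n * δ / 2 - n * φ) *
            Complex.sin (δ / 2 + φ)) / (2 * I) := by
  have hplus := sum_range_exp_mul_sin_half n (δ + 2 * φ)
  have hminus := sum_range_exp_mul_sin_half n (δ - 2 * φ)
  rw [show (δ + 2 * φ) / 2 = δ / 2 + φ by ring,
    show n * (δ + 2 * φ) / 2 = n * δ / 2 + n * φ by ring] at hplus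
  rw [show (δ - 2 * φ) / 2 = δ / 2 - φ by ring,
    show n * (δ - 2 * φ) / 2 = n * δ / 2 - n * φ by ring] at hminus
  have hphase_plus : Complex.exp (I * φ) * Complex.exp (I * (δ + 2 * φ) * (n - 1) / 2) =
      Complex.exp (I * δ * (n - 1) / 2) * Complex.exp (n * φ * I) := by
    simp only [← Complex.exp_add]
    congr 1
    ring
  have hphase_minus : Complex.exp (-(I * φ)) * Complex.exp (I * (δ - 2 * φ) * (n - 1) / 2) =
      Complex.exp (I * δ * (n - 1) / 2) * Complex.exp (-(n * φ) * I) := by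
    simp only [← Complex.exp_add]
    congr 1
    ring
  rw [sum_range_exp_mul_sin_odd_mul_eq_sub_div, div_mul_eq_mul_div]
  congr 1
  linear_combination
    Complex.exp (I * φ) * Complex.sin (δ / 2 - φ) * hplus -
      Complex.exp (-(I * φ)) * Complex.sin (δ / 2 + φ) * hminus +
      Complex.sin (n * δ / 2 + n * φ) * Complex.sin (δ / 2 - φ) * hphase_plus -
      Complex.sin (n * δ / 2 - n * φ) * Complex.sin (δ / 2 + φ) * hphase_minus

variable {n φ}

theorem sum_range_exp_mul_sin_odd_mul_mul_sin_mul_sin_of_cos_eq_zero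
    (hφ : Complex.cos (n * φ) = 0) :
    (∑ k ∈ Finset.range n, Complex.exp (I * k * δ) * Complex.sin ((2 * k + 1) * φ)) *
        (Complex.sin (δ / 2 + φ) * Complex.sin (δ / 2 - φ)) =
      -Complex.exp (I * δ * (n - 1) / 2) * Complex.cos (n * δ / 2) * Complex.cos (δ / 2) *
        Complex.sin φ := by
  have hsin_sq : Complex.sin (n * φ) ^ 2 = 1 := by
    simpa [hφ] using Complex.sin_sq_add_cos_sq (n * φ)
  have hdiff : Complex.sin (δ / 2 - φ) - Complex.sin (δ / 2 + φ) =
      -2 * Complex.cos (δ / 2) * Complex.sin φ := by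
    rw [Complex.sin_sub, Complex.sin_add]
    ring
  rw [sum_range_exp_mul_sin_odd_mul_mul_sin_mul_sin, Complex.exp_mul_I, Complex.exp_mul_I,
    Complex.cos_neg, Complex.sin_neg, Complex.sin_add (n * δ / 2), Complex.sin_sub (n * δ / 2),
    hφ, div_eq_iff (by simp)]
  linear_combination
    I * Complex.exp (I * δ * (n - 1) / 2) * Complex.cos (n * δ / 2) *
      ((Complex.sin (δ / 2 - φ) - Complex.sin (δ / 2 + φ)) * hsin_sq + hdiff)

end SineWindow

theorem stmt5_general (T : ℕ) (hT : 0 < T) (δ : ℂ)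
    (h₁ : Complex.sin (δ / 2 + π / (2 * T)) ≠ 0) (h₂ : Complex.sin (δ / 2 - π / (2 * T)) ≠ 0) :
    ∑ τ ∈ Finset.range T, Complex.exp (I * τ * δ) * Complex.sin (π * (τ + 1 / 2) / T) =
      -Complex.exp (I * δ * (T - 1) / 2) * Complex.cos (T * δ / 2) * Complex.cos (δ / 2) *
        Complex.sin (π / (2 * T)) /
        (Complex.sin (δ / 2 + π / (2 * T)) * Complex.sin (δ / 2 - π / (2 * T))) := by
  have hT₀ : (T : ℂ) ≠ 0 := Nat.cast_ne_zero.mpr hT.ne'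
  have hangle (τ : ℕ) : (π : ℂ) * (τ + 1 / 2) / T = (2 * τ + 1) * (π / (2 * T)) := by
    field_simp
  have hcos : Complex.cos (T * (π / (2 * T))) = 0 := by
    rw [show (T : ℂ) * (π / (2 * T)) = π / 2 by field_simp, Complex.cos_pi_div_two]
  simp only [hangle]
  exact eq_div_of_mul_eq (mul_ne_zero h₁ h₂)
    (sum_range_exp_mul_sin_odd_mul_mul_sin_mul_sin_of_cos_eq_zero δ hcos)

theorem stmt5 (T : ℕ) (hT : 0 < T) (δ : ℝ)
    (h₁ : Real.sin (δ/2 + π/(2*T)) ≠ 0) (h₂ : Real.sin (δ/2 - π/(2*T)) ≠ 0) :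
    ∑ τ ∈ Finset.range T,
        Complex.exp (Complex.I * τ * δ) * (Real.sin (π * (τ + 1/2) / T) : ℂ)
      = -Complex.exp (Complex.I * δ * (T - 1) / 2) * (Real.cos (T * δ / 2) : ℂ)
          * (Real.cos (δ/2) : ℂ) * (Real.sin (π/(2*T)) : ℂ)
        / ((Real.sin (δ/2 + π/(2*T)) : ℂ) * (Real.sin (δ/2 - π/(2*T)) : ℂ)) := by
  simpa using stmt5_general T hT δ (by exact_mod_cast h₁) (by exact_mod_cast h₂)
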